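/- Let f : ℍ → ℝ (regarded as the real-valued quaternion function q ↦ (f(q) : ℍ)) be three times continuously real-differentiable on an open set U ⊆ ℍ containing q₀. Then, as λ → 0, the remainder λ ↦ f(q₀ + λ) − f(q₀) − 4·Re((∂f/∂q)(q₀)·λ) − 2 Σ_{η ∈ {1,i,j,k}} Re((∂²f/∂q^η∂q)(q₀)·λ^η·λ) is big-O of |λ|³, where λ^η := η λ η⁻¹, Re(p) is the real (scalar) part of p, and (∂²f/∂q^η∂q)(q₀) is the left HR derivative with respect to η, taken at q₀, of the function q ↦ (∂f/∂q)(q). -/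

import Mathlib

open Quaternion Filter Topology Asymptotics

noncomputable section

/-- The imaginary unit `i` of the real quaternions. -/
def qI : ℍ[ℝ] := ⟨0, 1, 0, 0⟩
/-- The imaginary unit `j` of the real quaternions. -/
def qJ : ℍ[ℝ] := ⟨0, 0, 1, 0⟩
/-- The imaginary unit `k` of the real quaternions. -/
def qK : ℍ[ℝ] := ⟨0, 0, 0, 1⟩

/-- Quaternion rotation `p ↦ μ p μ⁻¹`. -/
def qRot (μ p : ℍ[ℝ]) : ℍ[ℝ] := μ * p * μ⁻¹

/-- The left GHR derivative `∂f/∂q^μ` at `q`. -/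
def lD (f : ℍ[ℝ] → ℍ[ℝ]) (μ q : ℍ[ℝ]) : ℍ[ℝ] :=
  (4 : ℍ[ℝ])⁻¹ * (fderiv ℝ f q 1 - fderiv ℝ f q qI * qRot μ qI
    - fderiv ℝ f q qJ * qRot μ qJ - fderiv ℝ f q qK * qRot μ qK)

/-- The left conjugate GHR derivative `∂f/∂q^{μ*}` at `q`. -/
def lDc (f : ℍ[ℝ] → ℍ[ℝ]) (μ q : ℍ[ℝ]) : ℍ[ℝ] :=
  (4 : ℍ[ℝ])⁻¹ * (fderiv ℝ f q 1 + fderiv ℝ f q qI * qRot μ qI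
    + fderiv ℝ f q qJ * qRot μ qJ + fderiv ℝ f q qK * qRot μ qK)

/-- The right GHR derivative `∂ᵣf/∂q^μ` at `q`. -/
def rD (f : ℍ[ℝ] → ℍ[ℝ]) (μ q : ℍ[ℝ]) : ℍ[ℝ] :=
  (4 : ℍ[ℝ])⁻¹ * (fderiv ℝ f q 1 - qRot μ qI * fderiv ℝ f q qI
    - qRot μ qJ * fderiv ℝ f q qJ - qRot μ qK * fderiv ℝ f q qK)

/-- The right conjugate GHR derivative `∂ᵣf/∂q^{μ*}` at `q`. -/
def rDc (f : ℍ[ℝ] → ℍ[ℝ]) (μ q : ℍ[ℝ]) : ℍ[ℝ] :=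
  (4 : ℍ[ℝ])⁻¹ * (fderiv ℝ f q 1 + qRot μ qI * fderiv ℝ f q qI
    + qRot μ qJ * fderiv ℝ f q qJ + qRot μ qK * fderiv ℝ f q qK)

theorem aux_taylor {E : Type*} [NormedAddCommGroup E] [NormedSpace ℝ E] (f : E → ℝ) (x : E)
    (hf : ContDiffAt ℝ 3 f x) :
    (fun l : E => f (x + l) - f x - fderiv ℝ f x l - (1/2) * fderiv ℝ (fderiv ℝ f) x l l)
      =O[𝓝 0] fun l : E => ‖l‖ ^ 3 := by
  have hc : ContinuousAt (iteratedFDeriv ℝ 3 f) x :=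
    (hf.iteratedFDeriv_right (i := 3) (m := 0) (by norm_num)).continuousAt
  have h1 : ∀ᶠ y in 𝓝 x, ‖iteratedFDeriv ℝ 3 f y‖ < ‖iteratedFDeriv ℝ 3 f x‖ + 1 :=
    hc.norm.eventually_lt continuousAt_const (by simp)
  have h2 : ∀ᶠ y in 𝓝 x, ContDiffAt ℝ 3 f y := hf.eventually (by simp)
  obtain ⟨r, hr, hb⟩ := Metric.eventually_nhds_iff.1 (h1.and h2)
  set M := ‖iteratedFDeriv ℝ 3 f x‖ + 1 with hM
  have hM0 : 0 ≤ M := by positivity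
  refine IsBigO.of_bound M ?_
  refine Metric.eventually_nhds_iff.2 ⟨r, hr, fun l hl => ?_⟩
  have hl' : ‖l‖ < r := by simpa using hl
  have hin : ∀ t ∈ Set.Icc (0:ℝ) 1, dist (x + t • l) x < r := by
    intro t ht
    rw [dist_eq_norm, add_sub_cancel_left, norm_smul, Real.norm_of_nonneg ht.1]
    nlinarith [norm_nonneg l, ht.2]
  have key := map_add_eq_sum_add_integral_iteratedFDeriv (n := 2) (f := f) (x := x) (y := l)
    (fun t ht => by
      have := (hb (hin t ht)).2
      norm_num
      exact this)
  have hint : ‖∫ t in (0:ℝ)..1, (1 - t)^2 • iteratedFDeriv ℝ (2 + 1) f (x + t • l) (fun _ ↦ l)‖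
      ≤ M * ‖l‖^3 * |1 - 0| := by
    refine intervalIntegral.norm_integral_le_of_norm_le_const fun t ht => ?_
    rw [Set.uIoc_of_le zero_le_one] at ht
    have hh := (hb (hin t ⟨ht.1.le, ht.2⟩)).1
    have h3 := (iteratedFDeriv ℝ 3 f (x + t • l)).le_opNorm (fun _ => l)
    simp only [Finset.prod_const, Finset.card_univ, Fintype.card_fin] at h3
    rw [norm_smul]
    have h4 : ‖(1 - t)^2‖ ≤ 1 := by
      rw [Real.norm_of_nonneg (sq_nonneg _)]
      nlinarith [ht.1, ht.2]
    calc _ ≤ 1 * (‖iteratedFDeriv ℝ 3 f (x + t • l)‖ * ‖l‖^3) := by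
            gcongr
      _ ≤ M * ‖l‖^3 := by rw [one_mul]; gcongr
  simp only [Finset.sum_range_succ, Finset.sum_range_zero, iteratedFDeriv_zero_apply,
    iteratedFDeriv_one_apply, iteratedFDeriv_two_apply] at key
  rw [key]
  simp only [Nat.factorial, smul_eq_mul] at hint ⊢
  norm_num at hint ⊢
  ring_nf at hint ⊢
  rw [abs_mul, abs_of_nonneg (by norm_num : (0:ℝ) ≤ 1/2)]
  have : 0 ≤ M * ‖l‖^3 := by positivity
  linarith

theorem qI_re : qI.re = 0 := rfl
theorem qI_imI : qI.imI = 1 := rfl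
theorem qI_imJ : qI.imJ = 0 := rfl
theorem qI_imK : qI.imK = 0 := rfl
theorem qJ_re : qJ.re = 0 := rfl
theorem qJ_imI : qJ.imI = 0 := rfl
theorem qJ_imJ : qJ.imJ = 1 := rfl
theorem qJ_imK : qJ.imK = 0 := rfl
theorem qK_re : qK.re = 0 := rfl
theorem qK_imI : qK.imI = 0 := rfl
theorem qK_imJ : qK.imJ = 0 := rfl
theorem qK_imK : qK.imK = 1 := rfl

attribute [local simp] qI_re qI_imI qI_imJ qI_imK qJ_re qJ_imI qJ_imJ qJ_imK qK_re qK_imI qK_imJ qK_imK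

theorem aux_decomp (l : ℍ[ℝ]) :
    l = l.re • (1 : ℍ[ℝ]) + l.imI • qI + l.imJ • qJ + l.imK • qK := by
  ext <;> simp

theorem aux_invs : qI⁻¹ = -qI ∧ qJ⁻¹ = -qJ ∧ qK⁻¹ = -qK := by
  refine ⟨?_, ?_, ?_⟩ <;>
  · symm
    refine eq_inv_of_mul_eq_one_left ?_
    ext <;> simp

theorem aux_four (x : ℍ[ℝ]) : (4 : ℍ[ℝ])⁻¹ * x = (1/4 : ℝ) • x := by
  have h : (4 : ℍ[ℝ]) = ((4 : ℝ) : ℍ[ℝ]) := rfl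
  rw [h, ← Quaternion.coe_inv, Quaternion.coe_mul_eq_smul]
  norm_num

theorem rot_one (x : ℍ[ℝ]) : qRot 1 x = x := by simp [qRot]
theorem rot_I_re (x : ℍ[ℝ]) : (qRot qI x).re = x.re := by
  rw [qRot, aux_invs.1]; simp
theorem rot_I_imI (x : ℍ[ℝ]) : (qRot qI x).imI = x.imI := by
  rw [qRot, aux_invs.1]; simp
theorem rot_I_imJ (x : ℍ[ℝ]) : (qRot qI x).imJ = -x.imJ := by
  rw [qRot, aux_invs.1]; simp
theorem rot_I_imK (x : ℍ[ℝ]) : (qRot qI x).imK = -x.imK := by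
  rw [qRot, aux_invs.1]; simp
theorem rot_J_re (x : ℍ[ℝ]) : (qRot qJ x).re = x.re := by
  rw [qRot, aux_invs.2.1]; simp
theorem rot_J_imI (x : ℍ[ℝ]) : (qRot qJ x).imI = -x.imI := by
  rw [qRot, aux_invs.2.1]; simp
theorem rot_J_imJ (x : ℍ[ℝ]) : (qRot qJ x).imJ = x.imJ := by
  rw [qRot, aux_invs.2.1]; simp
theorem rot_J_imK (x : ℍ[ℝ]) : (qRot qJ x).imK = -x.imK := by
  rw [qRot, aux_invs.2.1]; simp
theorem rot_K_re (x : ℍ[ℝ]) : (qRot qK x).re = x.re := by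
  rw [qRot, aux_invs.2.2]; simp
theorem rot_K_imI (x : ℍ[ℝ]) : (qRot qK x).imI = -x.imI := by
  rw [qRot, aux_invs.2.2]; simp
theorem rot_K_imJ (x : ℍ[ℝ]) : (qRot qK x).imJ = -x.imJ := by
  rw [qRot, aux_invs.2.2]; simp
theorem rot_K_imK (x : ℍ[ℝ]) : (qRot qK x).imK = x.imK := by
  rw [qRot, aux_invs.2.2]; simp

theorem aux_alg (b11 b1i b1j b1k bi1 bii bij bik bj1 bji bjj bjk bk1 bki bkj bkk : ℝ)
    (l : ℍ[ℝ]) (D1 DI DJ DK : ℍ[ℝ])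
    (h1 : D1 = (4 : ℍ[ℝ])⁻¹ * ((b11 : ℍ[ℝ]) - b1i * qI - b1j * qJ - b1k * qK))
    (hI : DI = (4 : ℍ[ℝ])⁻¹ * ((bi1 : ℍ[ℝ]) - bii * qI - bij * qJ - bik * qK))
    (hJ : DJ = (4 : ℍ[ℝ])⁻¹ * ((bj1 : ℍ[ℝ]) - bji * qI - bjj * qJ - bjk * qK))
    (hK : DK = (4 : ℍ[ℝ])⁻¹ * ((bk1 : ℍ[ℝ]) - bki * qI - bkj * qJ - bkk * qK)) :
    2 * (([1, qI, qJ, qK].map fun η =>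
      ((4 : ℍ[ℝ])⁻¹ * (D1 - DI * qRot η qI - DJ * qRot η qJ - DK * qRot η qK)
        * qRot η l * l).re).sum) =
    (1/2) * (l.re * (l.re * b11 + l.imI * b1i + l.imJ * b1j + l.imK * b1k)
      + l.imI * (l.re * bi1 + l.imI * bii + l.imJ * bij + l.imK * bik)
      + l.imJ * (l.re * bj1 + l.imI * bji + l.imJ * bjj + l.imK * bjk)
      + l.imK * (l.re * bk1 + l.imI * bki + l.imJ * bkj + l.imK * bkk)) := by
  subst h1 hI hJ hK
  simp only [List.map, List.sum_cons, List.sum_nil, rot_one, aux_four]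
  simp [rot_I_re, rot_I_imI, rot_I_imJ, rot_I_imK,
    rot_J_re, rot_J_imI, rot_J_imJ, rot_J_imK,
    rot_K_re, rot_K_imI, rot_K_imJ, rot_K_imK]
  ring

theorem taylor_theorem_real_valued
    (f : ℍ[ℝ] → ℝ) (U : Set ℍ[ℝ]) (hU : IsOpen U) (q₀ : ℍ[ℝ]) (hq₀ : q₀ ∈ U)
    (hf : ContDiffOn ℝ 3 (fun p => ((f p : ℝ) : ℍ[ℝ])) U) :
    (fun l : ℍ[ℝ] => f (q₀ + l) - f q₀
        - 4 * (lD (fun p => ((f p : ℝ) : ℍ[ℝ])) 1 q₀ * l).re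
        - 2 * (([1, qI, qJ, qK].map fun η =>
            (lD (fun p => lD (fun p' => ((f p' : ℝ) : ℍ[ℝ])) 1 p) η q₀
              * qRot η l * l).re).sum))
      =O[𝓝 0] fun l : ℍ[ℝ] => ‖l‖ ^ 3 := by
  have hF : ContDiffAt ℝ 3 (fun p => ((f p : ℝ) : ℍ[ℝ])) q₀ := hf.contDiffAt (hU.mem_nhds hq₀)
  let reL : ℍ[ℝ] →L[ℝ] ℝ := LinearMap.toContinuousLinearMap
    { toFun := fun q => q.re, map_add' := by simp, map_smul' := by simp }
  let coeL : ℝ →L[ℝ] ℍ[ℝ] := LinearMap.toContinuousLinearMap (Algebra.linearMap ℝ ℍ[ℝ])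
  have coeL_apply : ∀ r : ℝ, coeL r = (r : ℍ[ℝ]) := fun r => rfl
  have hf3 : ContDiffAt ℝ 3 f q₀ := by
    have := reL.contDiff.contDiffAt.comp q₀ hF
    exact this
  have hfd : ∀ᶠ p in 𝓝 q₀, DifferentiableAt ℝ f p := by
    filter_upwards [hf3.eventually (by simp)] with p hp using hp.differentiableAt (by norm_num)
  have hfd1 : ∀ᶠ p in 𝓝 q₀, ∀ v, fderiv ℝ (fun p => ((f p : ℝ) : ℍ[ℝ])) p v
      = ((fderiv ℝ f p v : ℝ) : ℍ[ℝ]) := by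
    filter_upwards [hfd] with p hp v
    have := (coeL.hasFDerivAt.comp p hp.hasFDerivAt).fderiv
    have h2 : fderiv ℝ (fun p => ((f p : ℝ) : ℍ[ℝ])) p = coeL.comp (fderiv ℝ f p) := this
    rw [h2]; rfl
  have hrot1 : ∀ p, qRot 1 p = p := by intro p; simp [qRot]
  have hlD : ∀ᶠ p in 𝓝 q₀, lD (fun p' => ((f p' : ℝ) : ℍ[ℝ])) 1 p =
      (4 : ℍ[ℝ])⁻¹ * (coeL (fderiv ℝ f p 1) - coeL (fderiv ℝ f p qI) * qI
        - coeL (fderiv ℝ f p qJ) * qJ - coeL (fderiv ℝ f p qK) * qK) := by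
    filter_upwards [hfd1] with p hp
    simp only [lD, hp, hrot1, coeL_apply]
  have hff : DifferentiableAt ℝ (fderiv ℝ f) q₀ :=
    (hf3.fderiv_right (m := 2) (by norm_num)).differentiableAt (by norm_num)
  set B := fderiv ℝ (fderiv ℝ f) q₀ with hB
  have hcw : ∀ w, HasFDerivAt (fun p => coeL (fderiv ℝ f p w)) (coeL.comp (B.flip w)) q₀ := by
    intro w
    have h1 : HasFDerivAt (fun p => fderiv ℝ f p w) (B.flip w) q₀ := by
      have := (ContinuousLinearMap.apply ℝ ℝ w).hasFDerivAt.comp q₀ hff.hasFDerivAt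
      exact this
    exact coeL.hasFDerivAt.comp q₀ h1
  have hD2 : ∀ v, fderiv ℝ (fun p => lD (fun p' => ((f p' : ℝ) : ℍ[ℝ])) 1 p) q₀ v =
      (4 : ℍ[ℝ])⁻¹ * (((B v 1 : ℝ) : ℍ[ℝ]) - (B v qI : ℝ) * qI
        - (B v qJ : ℝ) * qJ - (B v qK : ℝ) * qK) := by
    intro v
    rw [Filter.EventuallyEq.fderiv_eq hlD]
    have := ((((hcw 1).sub ((hcw qI).mul_const' qI)).sub ((hcw qJ).mul_const' qJ)).sub
      ((hcw qK).mul_const' qK)).const_mul (4 : ℍ[ℝ])⁻¹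
    have h := this.fderiv
    erw [h]
    simp [coeL_apply]
  refine (aux_taylor f q₀ hf3).congr_left fun l => ?_
  have e1 : fderiv ℝ f q₀ l = 4 * (lD (fun p => ((f p : ℝ) : ℍ[ℝ])) 1 q₀ * l).re := by
    rw [hlD.self_of_nhds]
    conv_lhs => rw [aux_decomp l]
    simp only [map_add, map_smul, coeL_apply, aux_four]
    simp
    ring
  have e2 := aux_alg (B 1 1) (B 1 qI) (B 1 qJ) (B 1 qK) (B qI 1) (B qI qI) (B qI qJ) (B qI qK)
    (B qJ 1) (B qJ qI) (B qJ qJ) (B qJ qK) (B qK 1) (B qK qI) (B qK qJ) (B qK qK) l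
    _ _ _ _ (hD2 1) (hD2 qI) (hD2 qJ) (hD2 qK)
  have e3 : ∀ v, B v l = l.re * B v 1 + l.imI * B v qI + l.imJ * B v qJ + l.imK * B v qK := by
    intro v
    conv_lhs => rw [aux_decomp l]
    simp only [map_add, map_smul, smul_eq_mul]
  have e4 : ∀ w, B l w = l.re * B 1 w + l.imI * B qI w + l.imJ * B qJ w + l.imK * B qK w := by
    intro w
    conv_lhs => rw [aux_decomp l]
    simp only [map_add, map_smul, smul_eq_mul, add_apply, smul_apply]
  rw [e4, e1, e3, e3, e3, e3, ← e2]
  rfl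

end
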